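/- Suppose the function 𝑝̃ has a unique maximizer m₀ on [0,1], that m₀ satisfies the fixed-point equation m₀ = g(τ(m₀)), and that 𝑝̃''(m₀) < 0. Then λ := −1/𝑝̃''(m₀) − 1/(2J) > 0, and there exists a constant K (independent of N) such that for all N ≥ 1, sup_{z∈ℝ} |ℙ((|𝓜(D)| − N·m₀)/N^{1/2} ≤ z) − ℙ(X ≤ z)| ≤ K/N^{1/2}, where D is drawn from the IMD Gibbs measure and X is a centered Gaussian random variable with variance λ. -/

import Mathlib

open Real Finset MeasureTheory

noncomputable section

/-- Dimer configurations (matchings of the complete graph on `Fin N`), encoded as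
involutions of `Fin N`: fixed points are monomers, 2-cycles are dimers. -/
abbrev Dimer (N : ℕ) := {f : Fin N → Fin N // ∀ i, f (f i) = i}

/-- The set of monomers (dimer-free vertices) of a dimer configuration. -/
def monomers {N : ℕ} (D : Dimer N) : Finset (Fin N) :=
  Finset.univ.filter fun i => D.1 i = i

/-- Monomer density `m(D) = |𝓜(D)|/N`. -/
def mDim {N : ℕ} (D : Dimer N) : ℝ := ((monomers D).card : ℝ) / N

/-- The parameter `b = (log N)/2 + h - J`. -/
def bIMD (N : ℕ) (J h : ℝ) : ℝ := Real.log N / 2 + h - J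

/-- The Gibbs weight `exp(-H(D)) = exp(N (a m(D)^2 + b m(D)))` with `a = J`. -/
def wDim (N : ℕ) (J h : ℝ) (D : Dimer N) : ℝ :=
  Real.exp (N * (J * mDim D ^ 2 + bIMD N J h * mDim D))

/-- The probability of an event `A` under the IMD Gibbs measure. -/
def probDim (N : ℕ) (J h : ℝ) (A : Dimer N → Prop) : ℝ :=
  (∑ D : Dimer N, Set.indicator {D | A D} (wDim N J h) D) / ∑ D : Dimer N, wDim N J h D

/-- The conditional probability `ℙ(A | B)` under the IMD Gibbs measure. -/
def condProbDim (N : ℕ) (J h : ℝ) (A B : Dimer N → Prop) : ℝ :=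
  (∑ D : Dimer N, Set.indicator {D | A D ∧ B D} (wDim N J h) D) /
    ∑ D : Dimer N, Set.indicator {D | B D} (wDim N J h) D

/-- `g(x) = (√(e^{4x} + 4 e^{2x}) - e^{2x})/2`. -/
def gFun (x : ℝ) : ℝ := (Real.sqrt (Real.exp (4*x) + 4 * Real.exp (2*x)) - Real.exp (2*x)) / 2

/-- `τ(x) = (2x-1)J + h`. -/
def tauFun (J h x : ℝ) : ℝ := (2*x - 1) * J + h

/-- `𝑝̃(m) = -J m² - (1 - g(τ(m)) + log(1 - g(τ(m))))/2`. -/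
def ptilde (J h m : ℝ) : ℝ :=
  -J * m^2 - (1 - gFun (tauFun J h m) + Real.log (1 - gFun (tauFun J h m))) / 2

/-- The CDF of a centered Gaussian with variance `v`, evaluated at `z`. -/
def gaussCDF (v : ℝ) (z : ℝ) : ℝ :=
  (ProbabilityTheory.gaussianReal 0 (Real.toNNReal v) (Set.Iic z)).toReal

/-- Spin configurations `Σ = {0,1}^N`. -/
abbrev Config (N : ℕ) := Fin N → Bool

/-- `𝓐(σ) = {i : σ_i = 1}`. -/
def ASet {N : ℕ} (σ : Config N) : Finset (Fin N) := Finset.univ.filter fun i => σ i = true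

/-- `M(σ) = ∑ σ_i`. -/
def Msum {N : ℕ} (σ : Config N) : ℕ := (ASet σ).card

/-- Magnetization `m(σ) = M(σ)/N`. -/
def mConf {N : ℕ} (σ : Config N) : ℝ := (Msum σ : ℝ) / N

/-- `D(σ)`: the number of dimer configurations `D` with `𝓜(D) = 𝓐(σ)`. -/
def Dcount (N : ℕ) (σ : Config N) : ℕ :=
  (Finset.univ.filter fun D : Dimer N => monomers D = ASet σ).card

/-- The weight `D(σ) exp(-H(σ))` of the weighted Curie–Weiss model. -/
def wConf (N : ℕ) (J h : ℝ) (σ : Config N) : ℝ :=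
  (Dcount N σ : ℝ) * Real.exp (N * (J * mConf σ ^ 2 + bIMD N J h * mConf σ))

/-- The probability of an event `A` under the weighted Curie–Weiss Gibbs measure. -/
def probConf (N : ℕ) (J h : ℝ) (A : Config N → Prop) : ℝ :=
  (∑ σ : Config N, Set.indicator {σ | A σ} (wConf N J h) σ) / ∑ σ : Config N, wConf N J h σ

/-- Expectation under the weighted Curie–Weiss Gibbs measure. -/
def EConf (N : ℕ) (J h : ℝ) (f : Config N → ℝ) : ℝ :=
  (∑ σ : Config N, wConf N J h σ * f σ) / ∑ σ : Config N, wConf N J h σ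

/-- `L₁(m) = 2(1-m)(m² - (1-m)e^{2τ(m)})/((1-m) + e^{2τ(m)})`. -/
def Lone (J h m : ℝ) : ℝ :=
  2*(1-m)*(m^2 - (1-m)*Real.exp (2 * tauFun J h m)) / ((1-m) + Real.exp (2 * tauFun J h m))

/-- `L₂(m) = 4(1-m)(m² + (1-m)e^{2τ(m)})/((1-m) + e^{2τ(m)})`. -/
def Ltwo (J h m : ℝ) : ℝ :=
  4*(1-m)*(m^2 + (1-m)*Real.exp (2 * tauFun J h m)) / ((1-m) + Real.exp (2 * tauFun J h m))

/-- The configuration obtained from `σ` by setting the spins at `u, v` to `s, t`. -/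
def upd {N : ℕ} (σ : Config N) (u v : Fin N) (s t : Bool) : Config N :=
  fun i => if i = u then s else if i = v then t else σ i

/-- The edges of the complete graph, enumerated as ordered pairs `u < v`. -/
def cEdges (N : ℕ) : Finset (Fin N × Fin N) := Finset.univ.filter fun p => p.1 < p.2

/-- The probability of resampling the pair of spins at `(u,v)` to `(s,t)`:
the conditional distribution of `(σ_u, σ_v)` given `(σ_i)_{i ≠ u,v}`. -/
def qCond (N : ℕ) (J h : ℝ) (σ : Config N) (u v : Fin N) (s t : Bool) : ℝ :=
  wConf N J h (upd σ u v s t) / ∑ st : Bool × Bool, wConf N J h (upd σ u v st.1 st.2)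

/-- `E[F(σ, σ') | σ]` for the exchangeable pair `(σ, σ')` obtained by resampling the
spins at a uniformly chosen edge. -/
def condE2 (N : ℕ) (J h : ℝ) (F : Config N → Config N → ℝ) (σ : Config N) : ℝ :=
  ((cEdges N).card : ℝ)⁻¹ * ∑ p ∈ cEdges N, ∑ st : Bool × Bool,
    qCond N J h σ p.1 p.2 st.1 st.2 * F σ (upd σ p.1 p.2 st.1 st.2)

/-- The weight of the Gibbs measure conditioned on the event `S`. -/
def wCond (N : ℕ) (J h : ℝ) (S : Config N → Prop) (σ : Config N) : ℝ :=
  Set.indicator {σ | S σ} (wConf N J h) σ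

/-- `ℙ_ℓ(A) = ℙ(A | S)`, probability under the conditioned Gibbs measure. -/
def probL (N : ℕ) (J h : ℝ) (S A : Config N → Prop) : ℝ :=
  (∑ σ : Config N, Set.indicator {σ | A σ} (wCond N J h S) σ) / ∑ σ : Config N, wCond N J h S σ

/-- Expectation under the conditioned Gibbs measure `ℙ(·|S)`. -/
def EL (N : ℕ) (J h : ℝ) (S : Config N → Prop) (f : Config N → ℝ) : ℝ :=
  (∑ σ : Config N, wCond N J h S σ * f σ) / ∑ σ : Config N, wCond N J h S σ

/-- Resampling probability for the conditioned measure `ℙ(·|S)`. -/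
def qCondL (N : ℕ) (J h : ℝ) (S : Config N → Prop) (σ : Config N) (u v : Fin N)
    (s t : Bool) : ℝ :=
  wCond N J h S (upd σ u v s t) / ∑ st : Bool × Bool, wCond N J h S (upd σ u v st.1 st.2)

/-- `E_ℓ[F(σ, σ') | σ]` for the exchangeable pair under the conditioned measure. -/
def condE2L (N : ℕ) (J h : ℝ) (S : Config N → Prop) (F : Config N → Config N → ℝ)
    (σ : Config N) : ℝ :=
  ((cEdges N).card : ℝ)⁻¹ * ∑ p ∈ cEdges N, ∑ st : Bool × Bool,
    qCondL N J h S σ p.1 p.2 st.1 st.2 * F σ (upd σ p.1 p.2 st.1 st.2)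

/-- The maximizer set `O` of `𝑝̃` on `[0,1]`. -/
def maxSet (J h : ℝ) : Set ℝ :=
  {x | x ∈ Set.Icc (0:ℝ) 1 ∧ ∀ y ∈ Set.Icc (0:ℝ) 1, ptilde J h y ≤ ptilde J h x}

end

open Filter Topology ProbabilityTheory
open scoped NNReal

/-!
Let `j` be the number of dimers, so that there are `N - 2 j` monomers. A configuration is an
involution, and the involutions with `j` two-cycles number `N! / ((N - 2j)! 2^j j!)`; hence the
total Gibbs weight of the monomer density `m` is explicit, and by Stirling's formula it is
`N^(N/2) exp (N I(m))` up to a factor of order `(N m (1 - m))^(-1/2)`.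

Gibbs' inequality `a - b ≤ a log a - a log b`, applied to `m` and `g = g(τ(m))` and to `1 - m` and
`1 - g`, gives `I ≤ 𝑝̃`, with equality at the solutions of `m = g(τ(m))`. So `m₀` is the unique
maximizer of `I` as well, and differentiating shows that `λ = -1 / 𝑝̃''(m₀) - 1 / (2J)` is
`-1 / I''(m₀)`.

Laplace's method around `m₀` then yields a local limit theorem: the weights, at the points
`√N (m - m₀)` of a grid of mesh `2 / √N`, are proportional to the Gaussian density of variance `λ`
up to an error `O(N^(-1/2))` with Gaussian decay. The decay makes the error summable, so both the
partition function and the distribution function are Riemann sums of that density with relative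
error `O(N^(-1/2))`. No separate asymptotics of the partition function is needed.
-/

/-! ### Riemann sums of Gaussian densities -/

lemma abs_exp_sub_exp_le {u v M : ℝ} (hu : exp u ≤ M) (hv : exp v ≤ M) :
    |exp u - exp v| ≤ M * |u - v| := by
  wlog huv : v ≤ u generalizing u v
  · rw [abs_sub_comm, abs_sub_comm u]
    exact this hv hu (le_of_not_ge huv)
  rw [abs_of_nonneg (sub_nonneg.mpr (exp_le_exp.mpr huv)), abs_of_nonneg (sub_nonneg.mpr huv)]
  calc exp u - exp v = exp u * (1 - exp (-(u - v))) := by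
        rw [mul_sub, ← exp_add]
        ring_nf
    _ ≤ exp u * (u - v) :=
        mul_le_mul_of_nonneg_left (sub_le_comm.mp (one_sub_le_exp_neg _)) (exp_pos u).le
    _ ≤ M * (u - v) := mul_le_mul_of_nonneg_right hu (sub_nonneg.mpr huv)

lemma one_add_abs_pow_le_exp {c : ℝ} (hc : 0 < c) (k : ℕ) (t : ℝ) :
    (1 + |t|) ^ k ≤ exp (k ^ 2 / (4 * c)) * exp (c * t ^ 2) := by
  calc (1 + |t|) ^ k ≤ exp |t| ^ k := by
        gcongr
        linarith [add_one_le_exp |t|]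
    _ = exp (k * |t|) := (exp_nat_mul _ _).symm
    _ ≤ exp (k ^ 2 / (4 * c) + c * t ^ 2) := by
        gcongr
        rw [← sub_nonneg, ← sq_abs t]
        have : (k : ℝ) ^ 2 / (4 * c) + c * |t| ^ 2 - k * |t|
            = (k - 2 * c * |t|) ^ 2 / (4 * c) := by
          field_simp
          ring
        rw [this]
        positivity
    _ = _ := exp_add _ _

lemma one_add_abs_pow_mul_exp_le {c : ℝ} (hc : 0 < c) (k : ℕ) (t : ℝ) :
    (1 + |t|) ^ k * exp (-c * t ^ 2) ≤ exp (k ^ 2 / (2 * c)) * exp (-(c / 2) * t ^ 2) := by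
  calc (1 + |t|) ^ k * exp (-c * t ^ 2)
      ≤ exp (k ^ 2 / (4 * (c / 2))) * exp (c / 2 * t ^ 2) * exp (-c * t ^ 2) := by
        gcongr
        exact one_add_abs_pow_le_exp (half_pos hc) k t
    _ = exp (k ^ 2 / (2 * c)) * exp (-(c / 2) * t ^ 2) := by
        rw [mul_assoc, ← exp_add]
        ring_nf

lemma exp_neg_mul_sq_le_of_abs_sub_le {c δ x t : ℝ} (hc : 0 ≤ c) (h : |x - t| ≤ δ) :
    exp (-c * t ^ 2) ≤ exp (c * δ ^ 2) * exp (-(c / 2) * x ^ 2) := by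
  rw [← exp_add, exp_le_exp]
  have hsq : (x - t) ^ 2 ≤ δ ^ 2 := sq_le_sq' (abs_le.mp h).1 (abs_le.mp h).2
  have hx : x ^ 2 ≤ 2 * (x - t) ^ 2 + 2 * t ^ 2 := by nlinarith [sq_nonneg (x - 2 * t)]
  nlinarith

lemma gaussianPDFReal_zero_eq (v : ℝ≥0) (x : ℝ) :
    gaussianPDFReal 0 v x = (√(2 * π * v))⁻¹ * exp (-(2 * v : ℝ)⁻¹ * x ^ 2) := by
  rw [gaussianPDFReal, sub_zero, neg_div, div_eq_inv_mul, neg_mul]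

lemma exists_abs_gaussianPDFReal_sub_le {v : ℝ≥0} (hv : v ≠ 0) (δ₀ : ℝ) :
    ∃ B, 0 ≤ B ∧ ∃ d > 0, ∀ x t : ℝ, |x - t| ≤ δ₀ →
      |gaussianPDFReal 0 v x - gaussianPDFReal 0 v t| ≤ B * |x - t| * exp (-d * x ^ 2) := by
  set q : ℝ := (2 * v : ℝ)⁻¹
  set a : ℝ := (√(2 * π * v))⁻¹
  have hq0 : 0 < q := by positivity
  refine ⟨a * exp (q * δ₀ ^ 2) * q * (2 + |δ₀|) * exp (1 / q), by positivity, q / 4, by positivity,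
    fun x t h => ?_⟩
  have hx : exp (-q * x ^ 2) ≤ exp (q * δ₀ ^ 2) * exp (-(q / 2) * x ^ 2) :=
    exp_neg_mul_sq_le_of_abs_sub_le hq0.le (by simpa using (abs_nonneg _).trans h)
  have ht : exp (-q * t ^ 2) ≤ exp (q * δ₀ ^ 2) * exp (-(q / 2) * x ^ 2) :=
    exp_neg_mul_sq_le_of_abs_sub_le hq0.le h
  have hsum : |x + t| ≤ (2 + |δ₀|) * (1 + |x|) := by
    have h1 : |x + t| ≤ 2 * |x| + |x - t| := by
      calc |x + t| = |2 * x - (x - t)| := by ring_nf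
        _ ≤ |2 * x| + |x - t| := abs_sub _ _
        _ = 2 * |x| + |x - t| := by rw [abs_mul, abs_two]
    nlinarith [abs_nonneg x, le_abs_self δ₀, mul_nonneg (abs_nonneg δ₀) (abs_nonneg x)]
  have hdiff : |-q * x ^ 2 - -q * t ^ 2| = q * (|x - t| * |x + t|) := by
    rw [← abs_mul, ← abs_of_pos hq0, ← abs_mul, abs_of_pos hq0, ← abs_neg]
    ring_nf
  have hpoly : 1 + |x| ≤ exp (1 / q) * exp (q / 4 * x ^ 2) := by
    simpa [div_eq_mul_inv, mul_comm] using one_add_abs_pow_le_exp (c := q / 4) (by positivity) 1 x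
  rw [gaussianPDFReal_zero_eq, gaussianPDFReal_zero_eq, ← mul_sub, abs_mul,
    abs_of_nonneg (by positivity : 0 ≤ a)]
  calc a * |exp (-q * x ^ 2) - exp (-q * t ^ 2)|
      ≤ a * (exp (q * δ₀ ^ 2) * exp (-(q / 2) * x ^ 2) * (q * (|x - t| * |x + t|))) := by
        gcongr
        exact (abs_exp_sub_exp_le hx ht).trans_eq (by rw [hdiff])
    _ ≤ a * (exp (q * δ₀ ^ 2) * exp (-(q / 2) * x ^ 2) * (q * (|x - t| *
          ((2 + |δ₀|) * (exp (1 / q) * exp (q / 4 * x ^ 2)))))) := by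
        gcongr
        exact hsum.trans (by gcongr)
    _ = a * exp (q * δ₀ ^ 2) * q * (2 + |δ₀|) * exp (1 / q) * |x - t| * exp (-(q / 4) * x ^ 2) := by
        rw [show -(q / 4) * x ^ 2 = -(q / 2) * x ^ 2 + q / 4 * x ^ 2 by ring, exp_add]
        ring

lemma exists_abs_sub_gaussianPDFReal_le {v : ℝ≥0} (hv : v ≠ 0) {c : ℝ} (hc : 0 < c) (δ₀ : ℝ) :
    ∃ A, 0 ≤ A ∧ ∃ d > 0, ∀ {w t x δ E : ℝ}, δ ≤ δ₀ → 0 ≤ E → x ∈ Set.Ioc (t - δ) t →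
      |w - gaussianPDFReal 0 v t| ≤ E * exp (-c * t ^ 2) →
      |w - gaussianPDFReal 0 v x| ≤ A * (E + δ) * exp (-d * x ^ 2) := by
  obtain ⟨B, hB, d, hd, hlip⟩ := exists_abs_gaussianPDFReal_sub_le hv δ₀
  refine ⟨exp (c * δ₀ ^ 2) + B, by positivity, min (c / 2) d, by positivity,
    fun {w t x δ E} hδ hE hx hw => ?_⟩
  have hxt : |x - t| ≤ δ := abs_le.mpr ⟨by linarith [hx.1], by linarith [hx.1, hx.2]⟩
  have hδ0 : 0 ≤ δ := (abs_nonneg _).trans hxt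
  have hcx : exp (-(c / 2) * x ^ 2) ≤ exp (-min (c / 2) d * x ^ 2) := by
    gcongr
    exact min_le_left _ _
  have hdx : exp (-d * x ^ 2) ≤ exp (-min (c / 2) d * x ^ 2) := by
    gcongr
    exact min_le_right _ _
  calc |w - gaussianPDFReal 0 v x|
      ≤ |w - gaussianPDFReal 0 v t| + |gaussianPDFReal 0 v t - gaussianPDFReal 0 v x| :=
        abs_sub_le _ _ _
    _ ≤ E * (exp (c * δ₀ ^ 2) * exp (-(c / 2) * x ^ 2)) + B * |x - t| * exp (-d * x ^ 2) := by
        refine add_le_add (hw.trans ?_) ((abs_sub_comm _ _).trans_le (hlip x t (hxt.trans hδ)))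
        gcongr
        exact exp_neg_mul_sq_le_of_abs_sub_le hc.le (hxt.trans hδ)
    _ ≤ E * (exp (c * δ₀ ^ 2) * exp (-min (c / 2) d * x ^ 2))
          + B * δ * exp (-min (c / 2) d * x ^ 2) := by gcongr
    _ ≤ (exp (c * δ₀ ^ 2) + B) * (E + δ) * exp (-min (c / 2) d * x ^ 2) := by
        rw [← sub_nonneg]
        ring_nf
        positivity

lemma gaussianReal_real_eq_integral {v : ℝ≥0} (hv : v ≠ 0) (s : Set ℝ) :
    (gaussianReal 0 v).real s = ∫ x in s, gaussianPDFReal 0 v x := by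
  rw [measureReal_def, gaussianReal_apply_eq_integral _ hv, ENNReal.toReal_ofReal]
  exact integral_nonneg fun x => gaussianPDFReal_nonneg 0 v x

lemma exists_abs_sum_sub_gaussianReal_biUnion_le (ι : Type*) {v : ℝ≥0} (hv : v ≠ 0) {c : ℝ}
    (hc : 0 < c) (δ₀ : ℝ) :
    ∃ C, 0 ≤ C ∧ ∀ {s : Finset ι} {t w : ι → ℝ} {δ E : ℝ}, 0 ≤ δ → δ ≤ δ₀ → 0 ≤ E →
      (s : Set ι).PairwiseDisjoint (fun i => Set.Ioc (t i - δ) (t i)) →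
      (∀ i ∈ s, |w i - gaussianPDFReal 0 v (t i)| ≤ E * exp (-c * t i ^ 2)) →
      |δ * ∑ i ∈ s, w i - (gaussianReal 0 v).real (⋃ i ∈ s, Set.Ioc (t i - δ) (t i))|
        ≤ C * (E + δ) := by
  obtain ⟨A, hA, d, hd, hcell⟩ := exists_abs_sub_gaussianPDFReal_le hv hc δ₀
  refine ⟨A * ∫ x, exp (-d * x ^ 2), by positivity, fun {s t w δ E} hδ hδ₀ hE hdisj hw => ?_⟩
  set I : ι → Set ℝ := fun i => Set.Ioc (t i - δ) (t i)
  set φ := gaussianPDFReal 0 v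
  have hφ : Integrable φ := integrable_gaussianPDFReal 0 v
  have hexp : Integrable fun x : ℝ => exp (-d * x ^ 2) := integrable_exp_neg_mul_sq hd
  have hI : ∀ i, MeasurableSet (I i) := fun i => measurableSet_Ioc
  have hdiff : δ * ∑ i ∈ s, w i - (gaussianReal 0 v).real (⋃ i ∈ s, I i)
      = ∑ i ∈ s, ∫ x in I i, (w i - φ x) := by
    rw [gaussianReal_real_eq_integral hv, integral_biUnion_finset _ (fun i _ => hI i) hdisj
      fun i _ => hφ.integrableOn, mul_sum, ← sum_sub_distrib]
    refine sum_congr rfl fun i _ => ?_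
    rw [integral_sub (integrable_const _) hφ.integrableOn, setIntegral_const, smul_eq_mul,
      Real.volume_real_Ioc_of_le (by linarith)]
    ring
  have hbound : ∀ i ∈ s, |∫ x in I i, (w i - φ x)|
      ≤ ∫ x in I i, A * (E + δ) * exp (-d * x ^ 2) := by
    intro i hi
    rw [← norm_eq_abs]
    exact norm_integral_le_of_norm_le (hexp.const_mul _).integrableOn <|
      (ae_restrict_iff' (hI i)).mpr (.of_forall fun x hx => hcell hδ₀ hE hx (hw i hi))
  calc |δ * ∑ i ∈ s, w i - (gaussianReal 0 v).real (⋃ i ∈ s, I i)|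
      ≤ ∑ i ∈ s, ∫ x in I i, A * (E + δ) * exp (-d * x ^ 2) := by
        rw [hdiff]
        exact (abs_sum_le_sum_abs _ _).trans (sum_le_sum hbound)
    _ = ∫ x in ⋃ i ∈ s, I i, A * (E + δ) * exp (-d * x ^ 2) :=
        (integral_biUnion_finset _ (fun i _ => hI i) hdisj
          fun i _ => (hexp.const_mul _).integrableOn).symm
    _ ≤ ∫ x, A * (E + δ) * exp (-d * x ^ 2) :=
        setIntegral_le_integral (hexp.const_mul _) (.of_forall fun x => by positivity)
    _ = A * (∫ x, exp (-d * x ^ 2)) * (E + δ) := by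
        rw [integral_const_mul]
        ring

lemma gaussianReal_real_le_abs_le (v : ℝ≥0) {r : ℝ} (hr : 0 < r) :
    (gaussianReal 0 v).real {x | r ≤ |x|} ≤ v / r ^ 2 := by
  have h := meas_ge_le_variance_div_sq (memLp_id_gaussianReal (μ := 0) (v := v) 2) hr
  simp only [id_eq, integral_id_gaussianReal, sub_zero, variance_id_gaussianReal] at h
  exact ENNReal.toReal_le_of_le_ofReal (by positivity) h

lemma gaussianReal_real_Ioc_le {v : ℝ≥0} (hv : v ≠ 0) {a b : ℝ} (hab : a ≤ b) :
    (gaussianReal 0 v).real (Set.Ioc a b) ≤ (√(2 * π * v))⁻¹ * (b - a) := by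
  rw [gaussianReal_real_eq_integral hv, ← Real.volume_real_Ioc_of_le hab]
  refine (le_norm_self _).trans (norm_setIntegral_le_of_norm_le_const measure_Ioc_lt_top
    fun x _ => ?_)
  rw [norm_of_nonneg (gaussianPDFReal_nonneg 0 v x), gaussianPDFReal_zero_eq]
  refine mul_le_of_le_one_right (by positivity) (exp_le_one_iff.mpr ?_)
  rw [neg_mul, neg_nonpos]
  positivity

/-- The points `t i`, `i ∈ s`, form a grid of mesh `δ` on `(-r, r)`: the cells `(t i - δ, t i]` are
pairwise disjoint and together contain `(-r, r)`. -/
structure IsGrid {ι : Type*} (s : Finset ι) (t : ι → ℝ) (δ r : ℝ) : Prop where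
  pairwiseDisjoint : (s : Set ι).PairwiseDisjoint fun i => Set.Ioc (t i - δ) (t i)
  subset_biUnion : Set.Ioo (-r) r ⊆ ⋃ i ∈ s, Set.Ioc (t i - δ) (t i)

section

variable {ι : Type*} {s : Finset ι} {t : ι → ℝ} {δ r : ℝ}

lemma IsGrid.abs_gaussianReal_biUnion_sub_one_le (hg : IsGrid s t δ r) (hr : 0 < r) (v : ℝ≥0) :
    |(gaussianReal 0 v).real (⋃ i ∈ s, Set.Ioc (t i - δ) (t i)) - 1| ≤ v / r ^ 2 := by
  have hmeas : MeasurableSet (⋃ i ∈ s, Set.Ioc (t i - δ) (t i)) :=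
    s.measurableSet_biUnion fun i _ => measurableSet_Ioc
  rw [abs_sub_comm, ← probReal_compl_eq_one_sub hmeas, abs_of_nonneg measureReal_nonneg]
  refine (measureReal_mono fun x hx => ?_).trans (gaussianReal_real_le_abs_le v hr)
  exact not_lt.mp fun h => hx (hg.subset_biUnion (abs_lt.mp h))

lemma IsGrid.abs_gaussianReal_biUnion_filter_sub_Iic_le (hg : IsGrid s t δ r) (hr : 0 < r)
    (hδ : 0 ≤ δ) {v : ℝ≥0} (hv : v ≠ 0) (z : ℝ) :
    |(gaussianReal 0 v).real (⋃ i ∈ s.filter (t · ≤ z), Set.Ioc (t i - δ) (t i))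
      - (gaussianReal 0 v).real (Set.Iic z)| ≤ v / r ^ 2 + (√(2 * π * v))⁻¹ * δ := by
  set U := ⋃ i ∈ s.filter (t · ≤ z), Set.Ioc (t i - δ) (t i)
  have hU : MeasurableSet U := measurableSet_biUnion _ fun i _ => measurableSet_Ioc
  have hUz : U ⊆ Set.Iic z :=
    Set.iUnion₂_subset fun i hi x hx => hx.2.trans (mem_filter.mp hi).2
  have hdiff : Set.Iic z \ U ⊆ {x | r ≤ |x|} ∪ Set.Ioc (z - δ) z := by
    rintro x ⟨hxz, hxU⟩
    refine or_iff_not_imp_left.mpr fun hxr => ⟨?_, hxz⟩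
    obtain ⟨i, hi, hxi⟩ := Set.mem_iUnion₂.mp (hg.subset_biUnion (abs_lt.mp (not_le.mp hxr)))
    have hzi : z < t i := not_le.mp fun h =>
      hxU (Set.mem_iUnion₂.mpr ⟨i, mem_filter.mpr ⟨hi, h⟩, hxi⟩)
    linarith [hxi.1]
  rw [abs_sub_comm, ← measureReal_sdiff hUz hU, abs_of_nonneg measureReal_nonneg]
  calc (gaussianReal 0 v).real (Set.Iic z \ U)
      ≤ (gaussianReal 0 v).real {x | r ≤ |x|} + (gaussianReal 0 v).real (Set.Ioc (z - δ) z) :=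
        (measureReal_mono hdiff).trans (measureReal_union_le _ _)
    _ ≤ v / r ^ 2 + (√(2 * π * v))⁻¹ * δ := by
        refine add_le_add (gaussianReal_real_le_abs_le v hr) ?_
        simpa using gaussianReal_real_Ioc_le hv (sub_le_self z hδ)

end

lemma abs_div_sub_le {x X y e : ℝ} (hx : 0 ≤ x) (hxX : x ≤ X) (hxy : |x - y| ≤ e)
    (hX : |X - 1| ≤ e) : |x / X - y| ≤ 2 * e := by
  have hdiv : |x / X - x| ≤ e := by
    rcases (hx.trans hxX).eq_or_lt with h | h
    · obtain rfl : x = 0 := by linarith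
      simpa using (abs_nonneg _).trans hX
    · calc |x / X - x| = x / X * |X - 1| := by
            rw [← abs_of_nonneg (div_nonneg hx h.le), ← abs_mul, abs_of_nonneg (div_nonneg hx h.le),
              mul_sub, div_mul_cancel₀ _ h.ne', mul_one, abs_sub_comm]
        _ ≤ 1 * e := mul_le_mul ((div_le_one h).mpr hxX) hX (abs_nonneg _) zero_le_one
        _ = e := one_mul e
  linarith [abs_sub_le (x / X) x y]

theorem exists_abs_sum_div_sum_sub_gaussianReal_le (ι : Type*) {v : ℝ≥0} (hv : v ≠ 0) {c : ℝ}
    (hc : 0 < c) (δ₀ : ℝ) :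
    ∃ C, 0 ≤ C ∧ ∀ {s : Finset ι} {t W : ι → ℝ} {δ r E Z : ℝ}, IsGrid s t δ r → 0 < r →
      0 < δ → δ ≤ δ₀ → 0 ≤ E → 0 < Z → (∀ i ∈ s, 0 ≤ W i) →
      (∀ i ∈ s, |W i / Z - gaussianPDFReal 0 v (t i)| ≤ E * exp (-c * t i ^ 2)) →
      ∀ z, |(∑ i ∈ s with t i ≤ z, W i) / ∑ i ∈ s, W i - (gaussianReal 0 v).real (Set.Iic z)|
        ≤ C * (E + δ + 1 / r ^ 2) := by
  obtain ⟨C, hC, hsum⟩ := exists_abs_sum_sub_gaussianReal_biUnion_le ι hv hc δ₀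
  set a : ℝ := (√(2 * π * v))⁻¹
  refine ⟨2 * (C + v + a), by positivity,
    fun {s t W δ r E Z} hg hr hδ hδ₀ hE hZ hW hloc z => ?_⟩
  set e := (C + v + a) * (E + δ + 1 / r ^ 2) with he
  have hbound : C * (E + δ) + (v / r ^ 2 + a * δ) ≤ e := by
    rw [← sub_nonneg, he]
    ring_nf
    positivity
  have hpart : |δ * ∑ i ∈ s with t i ≤ z, W i / Z - (gaussianReal 0 v).real (Set.Iic z)| ≤ e :=
    (abs_sub_le _ _ _).trans <| (add_le_add
      (hsum hδ.le hδ₀ hE (hg.pairwiseDisjoint.subset (coe_subset.mpr (filter_subset _ s)))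
        fun i hi => hloc i (filter_subset _ s hi))
      (hg.abs_gaussianReal_biUnion_filter_sub_Iic_le hr hδ.le hv z)).trans hbound
  have htotal : |δ * ∑ i ∈ s, W i / Z - 1| ≤ e :=
    (abs_sub_le _ _ _).trans <| (add_le_add (hsum hδ.le hδ₀ hE hg.pairwiseDisjoint hloc)
      (hg.abs_gaussianReal_biUnion_sub_one_le hr v)).trans <|
      le_trans (by gcongr; exact le_add_of_nonneg_right (by positivity)) hbound
  have hratio : (δ * ∑ i ∈ s with t i ≤ z, W i / Z) / (δ * ∑ i ∈ s, W i / Z)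
      = (∑ i ∈ s with t i ≤ z, W i) / ∑ i ∈ s, W i := by
    rw [← sum_div, ← sum_div, mul_div_mul_left _ _ hδ.ne', div_div_div_cancel_right₀ hZ.ne']
  rw [← hratio, mul_assoc]
  refine abs_div_sub_le ?_ ?_ hpart htotal
  · exact mul_nonneg hδ.le (sum_nonneg fun i hi =>
      div_nonneg (hW i (filter_subset _ s hi)) hZ.le)
  · exact mul_le_mul_of_nonneg_left (sum_le_sum_of_subset_of_nonneg (filter_subset _ s)
      fun i hi _ => div_nonneg (hW i hi) hZ.le) hδ.le

/-! ### Laplace's method -/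

lemma exists_le_sub_mul_dist_sq_of_isCompact {X : Type*} [MetricSpace X] {K : Set X}
    (hK : IsCompact K) {f : X → ℝ} (hf : ContinuousOn f K) {x₀ : X}
    (hlt : ∀ x ∈ K, x ≠ x₀ → f x < f x₀) {b : ℝ} (hb : 0 < b)
    (hloc : ∀ᶠ x in 𝓝 x₀, f x ≤ f x₀ - b * dist x x₀ ^ 2) :
    ∃ c > 0, ∀ x ∈ K, f x ≤ f x₀ - c * dist x x₀ ^ 2 := by
  obtain ⟨ε, hε, hball⟩ := Metric.eventually_nhds_iff_ball.mp hloc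
  have hdist : ∀ x ∈ K \ Metric.ball x₀ ε, 0 < dist x x₀ := fun x hx =>
    hε.trans_le (not_lt.mp hx.2)
  have hcont : ContinuousOn (fun x => (f x₀ - f x) / dist x x₀ ^ 2) (K \ Metric.ball x₀ ε) :=
    (continuousOn_const.sub (hf.mono Set.sdiff_subset)).div (by fun_prop)
      fun x hx => (pow_pos (hdist x hx) 2).ne'
  obtain ⟨a, ha, hfar⟩ := (hK.diff Metric.isOpen_ball).exists_forall_le' hcont fun x hx =>
    div_pos (sub_pos.mpr (hlt x hx.1 (dist_pos.mp (hdist x hx)))) (pow_pos (hdist x hx) 2)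
  refine ⟨min a b, lt_min ha hb, fun x hx => ?_⟩
  by_cases hxε : x ∈ Metric.ball x₀ ε
  · refine (hball x hxε).trans (sub_le_sub_left ?_ _)
    gcongr
    exact min_le_right a b
  · have h := (le_div_iff₀ (pow_pos (hdist x ⟨hx, hxε⟩) 2)).mp (hfar x ⟨hx, hxε⟩)
    have hmin : min a b * dist x x₀ ^ 2 ≤ a * dist x x₀ ^ 2 := by
      gcongr
      exact min_le_left a b
    linarith

lemma isBigO_sub_of_hasDerivAt {E : Type*} [NormedAddCommGroup E] [NormedSpace ℝ E]
    {f f' : ℝ → E} {a : ℝ} {k : ℕ} (hf : ∀ᶠ x in 𝓝 a, HasDerivAt f (f' x) x)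
    (hf' : f' =O[𝓝 a] fun x => (x - a) ^ k) :
    (fun x => f x - f a) =O[𝓝 a] fun x => (x - a) ^ (k + 1) := by
  obtain ⟨C, hC, hbound⟩ := hf'.exists_nonneg
  obtain ⟨ε, hε, hball⟩ := Metric.eventually_nhds_iff_ball.mp (hf.and hbound.bound)
  refine Asymptotics.IsBigO.of_bound C ?_
  filter_upwards [Metric.ball_mem_nhds a hε] with x hx
  have hmem : ∀ y ∈ Metric.closedBall a |x - a|, y ∈ Metric.ball a ε := fun y hy =>
    (Metric.mem_closedBall.mp hy).trans_lt hx
  have h := (convex_closedBall a |x - a|).norm_image_sub_le_of_norm_hasDerivWithin_le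
    (C := C * |x - a| ^ k) (fun y hy => (hball y (hmem y hy)).1.hasDerivWithinAt)
    (fun y hy => (hball y (hmem y hy)).2.trans ?_) (Metric.mem_closedBall_self (abs_nonneg _))
    (Metric.mem_closedBall.mpr (Real.dist_eq x a).le)
  · simpa only [norm_pow, norm_mul, Real.norm_eq_abs, pow_succ, mul_assoc] using h
  · rw [norm_pow, ← dist_eq_norm]
    gcongr
    exact Metric.mem_closedBall.mp hy

lemma isBigO_sub_taylor_two {f f' f'' : ℝ → ℝ} {a : ℝ}
    (hf : ∀ᶠ x in 𝓝 a, HasDerivAt f (f' x) x) (hf' : ∀ᶠ x in 𝓝 a, HasDerivAt f' (f'' x) x)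
    (hf'' : DifferentiableAt ℝ f'' a) :
    (fun x => f x - (f a + f' a * (x - a) + f'' a / 2 * (x - a) ^ 2))
      =O[𝓝 a] fun x => (x - a) ^ 3 := by
  have h₂ : (fun x => f'' x - f'' a) =O[𝓝 a] fun x => (x - a) ^ 1 := by
    simpa only [pow_one] using hf''.isBigO_sub
  have h₁ : (fun x => f' x - f' a - f'' a * (x - a)) =O[𝓝 a] fun x => (x - a) ^ 2 := by
    have hderiv : ∀ᶠ x in 𝓝 a,
        HasDerivAt (fun y => f' y - f' a - f'' a * (y - a)) (f'' x - f'' a) x :=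
      hf'.mono fun x hx =>
        ((hx.sub_const (f' a)).sub (((hasDerivAt_id x).sub_const a).const_mul (f'' a))).congr_deriv
          (by rw [mul_one])
    simpa using isBigO_sub_of_hasDerivAt hderiv h₂
  have hderiv : ∀ᶠ x in 𝓝 a, HasDerivAt
      (fun y => f y - (f a + f' a * (y - a) + f'' a / 2 * (y - a) ^ 2))
      (f' x - f' a - f'' a * (x - a)) x := hf.mono fun x hx => by
    have hid := (hasDerivAt_id x).sub_const a
    refine (hx.sub (((hid.const_mul (f' a)).const_add (f a)).add
      ((hid.pow 2).const_mul (f'' a / 2)))).congr_deriv ?_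
    simp only [id]
    ring
  simpa using isBigO_sub_of_hasDerivAt hderiv h₁

section

variable {q c n y u : ℝ}

lemma sq_mul_abs_cube_add_le {B D s : ℝ} (hB : 0 ≤ B) (hD : 0 ≤ D) (hs : 1 ≤ s) :
    s ^ 2 * (D * |y| ^ 3) + B * (|y| + 1 / s ^ 2) ≤ (2 * B + D) / s * (1 + |s * y|) ^ 3 := by
  have hs0 : 0 < s := zero_lt_one.trans_le hs
  have hy : |y| = |s * y| / s := by
    rw [abs_mul, abs_of_pos hs0, mul_div_cancel_left₀ _ hs0.ne']
  rw [hy]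
  calc s ^ 2 * (D * (|s * y| / s) ^ 3) + B * (|s * y| / s + 1 / s ^ 2)
      = (D * |s * y| ^ 3 + B * |s * y| + B * (1 / s)) / s := by
        field_simp
        ring
    _ ≤ (D * |s * y| ^ 3 + B * |s * y| + B * 1) / s := by
        gcongr
        exact (div_le_one hs0).mpr hs
    _ ≤ (2 * B + D) * (1 + |s * y|) ^ 3 / s := by
        gcongr
        rw [← sub_nonneg]
        ring_nf
        positivity
    _ = (2 * B + D) / s * (1 + |s * y|) ^ 3 := by ring

lemma abs_exp_sub_exp_neg_mul_sq_le_of_near {B D ε v : ℝ} (hc : c ≤ q) (hn : 1 ≤ n)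
    (hB : 0 ≤ B) (hD : 0 ≤ D) (hy : |y| ≤ ε) (hv : v ≤ -c * (√n * y) ^ 2)
    (hvq : |v + q * (√n * y) ^ 2| ≤ n * (D * |y| ^ 3)) (huv : |u - v| ≤ B * (|y| + 1 / n)) :
    |exp u - exp (-q * (√n * y) ^ 2)|
      ≤ exp (B * (ε + 1)) * (2 * B + D) / √n
        * ((1 + |√n * y|) ^ 3 * exp (-c * (√n * y) ^ 2)) := by
  have hn0 : 0 < n := zero_lt_one.trans_le hn
  have hpoly : n * (D * |y| ^ 3) + B * (|y| + 1 / n)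
      ≤ (2 * B + D) / √n * (1 + |√n * y|) ^ 3 := by
    simpa only [sq_sqrt hn0.le] using
      sq_mul_abs_cube_add_le (y := y) hB hD (one_le_sqrt.mpr hn)
  have hε : 0 ≤ ε := (abs_nonneg y).trans hy
  have hny : B * (|y| + 1 / n) ≤ B * (ε + 1) := by
    gcongr
    exact (div_le_one hn0).mpr hn
  generalize √n * y = t at *
  have hu : exp u ≤ exp (B * (ε + 1)) * exp (-c * t ^ 2) := by
    rw [← exp_add, exp_le_exp]
    linarith [le_of_abs_le huv]
  have hq : exp (-q * t ^ 2) ≤ exp (B * (ε + 1)) * exp (-c * t ^ 2) := by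
    rw [← exp_add, exp_le_exp]
    nlinarith [sq_nonneg t, (by positivity : 0 ≤ B * (ε + 1))]
  calc |exp u - exp (-q * t ^ 2)|
      ≤ exp (B * (ε + 1)) * exp (-c * t ^ 2) * |(v + q * t ^ 2) + (u - v)| := by
        refine (abs_exp_sub_exp_le hu hq).trans_eq ?_
        ring_nf
    _ ≤ exp (B * (ε + 1)) * exp (-c * t ^ 2) * ((2 * B + D) / √n * (1 + |t|) ^ 3) := by
        gcongr
        exact (abs_add_le _ _).trans ((add_le_add hvq huv).trans hpoly)
    _ = _ := by ring

lemma abs_exp_sub_exp_neg_mul_sq_le_of_far {A ε : ℝ} (hc : c ≤ q) (hn : 1 ≤ n) (hε : 0 < ε)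
    (hy : ε ≤ |y|) (hu : u ≤ -c * (√n * y) ^ 2 + A + log n) :
    |exp u - exp (-q * (√n * y) ^ 2)|
      ≤ (exp A + 1) / ε ^ 3 / √n * ((1 + |√n * y|) ^ 3 * exp (-c * (√n * y) ^ 2)) := by
  have hn0 : 0 < n := zero_lt_one.trans_le hn
  have hs : 0 < √n := sqrt_pos.mpr hn0
  have hcube : n ≤ (1 + |√n * y|) ^ 3 / ε ^ 3 / √n := by
    rw [le_div_iff₀ hs, le_div_iff₀ (by positivity)]
    calc n * √n * ε ^ 3 = (√n * ε) ^ 3 := by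
          nth_rewrite 1 [← sq_sqrt hn0.le]
          ring
      _ ≤ (1 + |√n * y|) ^ 3 := by
          gcongr
          rw [abs_mul, abs_of_pos hs]
          nlinarith
  have hu' : exp u ≤ exp A * n * exp (-c * (√n * y) ^ 2) := by
    rw [← exp_log hn0, ← exp_add, ← exp_add, exp_log hn0, exp_le_exp]
    linarith
  have hq' : exp (-q * (√n * y) ^ 2) ≤ n * exp (-c * (√n * y) ^ 2) := by
    refine le_trans (exp_le_exp.mpr ?_) (le_mul_of_one_le_left (exp_pos _).le hn)
    gcongr
  calc |exp u - exp (-q * (√n * y) ^ 2)|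
      ≤ exp u + exp (-q * (√n * y) ^ 2) := by
        simpa only [abs_exp] using abs_sub (exp u) (exp (-q * (√n * y) ^ 2))
    _ ≤ (exp A + 1) * n * exp (-c * (√n * y) ^ 2) := by linarith
    _ ≤ (exp A + 1) * ((1 + |√n * y|) ^ 3 / ε ^ 3 / √n) * exp (-c * (√n * y) ^ 2) := by gcongr
    _ = _ := by ring

end

theorem exists_abs_exp_sub_exp_neg_mul_sq_le {f : ℝ → ℝ} {K : Set ℝ} {x₀ q c A B ε : ℝ}
    (hq : 0 < q) (hc : 0 < c) (hB : 0 ≤ B) (hε : 0 < ε)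
    (hdecay : ∀ x ∈ K, f x ≤ f x₀ - c * (x - x₀) ^ 2)
    (htaylor : (fun x => f x - (f x₀ - q * (x - x₀) ^ 2)) =O[𝓝 x₀] fun x => (x - x₀) ^ 3) :
    ∃ C, 0 ≤ C ∧ ∃ d > 0, ∀ {n x u : ℝ}, 1 ≤ n → x ∈ K →
      u ≤ n * (f x - f x₀) + A + log n →
      (|x - x₀| < ε → |u - n * (f x - f x₀)| ≤ B * (|x - x₀| + 1 / n)) →
      |exp u - exp (-q * (√n * (x - x₀)) ^ 2)| ≤ C / √n * exp (-d * (√n * (x - x₀)) ^ 2) := by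
  obtain ⟨D, hD, hbound⟩ := htaylor.exists_nonneg
  obtain ⟨η, hη, hball⟩ := Metric.eventually_nhds_iff_ball.mp hbound.bound
  set r := min ε η
  have hr : 0 < r := lt_min hε hη
  set b := min c q
  have hb : 0 < b := lt_min hc hq
  set C := exp (B * (r + 1)) * (2 * B + D) + (exp A + 1) / r ^ 3
  refine ⟨C * exp (3 ^ 2 / (2 * b)), by positivity, b / 2, half_pos hb,
    fun {n x u} hn hx hfar hnear => ?_⟩
  have hn0 : 0 ≤ n := zero_le_one.trans hn
  have hsq : (√n * (x - x₀)) ^ 2 = n * (x - x₀) ^ 2 := by rw [mul_pow, sq_sqrt hn0]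
  have hdec : n * (f x - f x₀) ≤ -b * (√n * (x - x₀)) ^ 2 := by
    rw [hsq]
    nlinarith [hdecay x hx, mul_le_mul_of_nonneg_right (min_le_left c q) (sq_nonneg (x - x₀))]
  suffices h : |exp u - exp (-q * (√n * (x - x₀)) ^ 2)|
      ≤ C / √n * ((1 + |√n * (x - x₀)|) ^ 3 * exp (-b * (√n * (x - x₀)) ^ 2)) by
    refine h.trans ?_
    rw [mul_div_right_comm, mul_assoc]
    exact mul_le_mul_of_nonneg_left (mod_cast one_add_abs_pow_mul_exp_le hb 3 _) (by positivity)
  rcases lt_or_ge |x - x₀| r with hxr | hxr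
  · have htay : |n * (f x - f x₀) + q * (√n * (x - x₀)) ^ 2| ≤ n * (D * |x - x₀| ^ 3) := by
      rw [hsq, show n * (f x - f x₀) + q * (n * (x - x₀) ^ 2)
        = n * (f x - (f x₀ - q * (x - x₀) ^ 2)) by ring, abs_mul, abs_of_nonneg hn0]
      gcongr
      simpa only [norm_pow, norm_eq_abs] using hball x (hxr.trans_le (min_le_right ε η))
    refine (abs_exp_sub_exp_neg_mul_sq_le_of_near (min_le_right c q) hn hB hD hxr.le hdec htay
      (hnear (hxr.trans_le (min_le_left ε η)))).trans ?_
    gcongr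
    exact le_add_of_nonneg_right (by positivity)
  · have hu : u ≤ -b * (√n * (x - x₀)) ^ 2 + A + log n := hfar.trans (by gcongr)
    refine (abs_exp_sub_exp_neg_mul_sq_le_of_far (min_le_right c q) hn hr hxr hu).trans ?_
    gcongr
    exact le_add_of_nonneg_left (by positivity)

lemma eventually_le_sub_mul_sq {f : ℝ → ℝ} {x₀ q : ℝ} (hq : 0 < q)
    (htaylor : (fun x => f x - (f x₀ - q * (x - x₀) ^ 2)) =O[𝓝 x₀] fun x => (x - x₀) ^ 3) :
    ∀ᶠ x in 𝓝 x₀, f x ≤ f x₀ - q / 2 * (x - x₀) ^ 2 := by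
  have hlittle : (fun x => f x - (f x₀ - q * (x - x₀) ^ 2)) =o[𝓝 x₀] fun x => (x - x₀) ^ 2 :=
    htaylor.trans_isLittleO <|
      (Asymptotics.isLittleO_pow_pow (by norm_num : 2 < 3)).comp_tendsto
        (tendsto_sub_nhds_zero_iff.mpr tendsto_id)
  filter_upwards [hlittle.bound (half_pos hq)] with x hx
  rw [norm_eq_abs, norm_pow, norm_eq_abs, sq_abs] at hx
  linarith [le_of_abs_le hx]

/-! ### Stirling's formula -/

/-- The error term `log n! - (n log n - n + log (2πn) / 2)` of Stirling's formula; it vanishes at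
`n = 0` because `log 0 = 0`. -/
noncomputable def stirlingError (n : ℕ) : ℝ :=
  log n.factorial - (n * log n - n + log (2 * π * n) / 2)

lemma stirlingError_zero : stirlingError 0 = 0 := by simp [stirlingError]

lemma stirlingError_eq_log_stirlingSeq {n : ℕ} (hn : n ≠ 0) :
    stirlingError n = log (Stirling.stirlingSeq n) - log √π := by
  have hn0 : (0 : ℝ) < n := by positivity
  rw [stirlingError, Stirling.log_stirlingSeq_formula, log_sqrt pi_pos.le,
    log_div hn0.ne' (exp_pos 1).ne', log_exp, show 2 * π * (n : ℝ) = π * (2 * n) by ring,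
    log_mul pi_pos.ne' (by positivity)]
  ring

lemma stirlingError_nonneg (n : ℕ) : 0 ≤ stirlingError n := by
  rcases eq_or_ne n 0 with rfl | hn
  · exact stirlingError_zero.ge
  · rw [stirlingError_eq_log_stirlingSeq hn, sub_nonneg]
    exact log_le_log (sqrt_pos.mpr pi_pos) (Stirling.sqrt_pi_le_stirlingSeq hn)

lemma tendsto_stirlingError : Tendsto stirlingError atTop (𝓝 0) := by
  have h := (Stirling.tendsto_stirlingSeq_sqrt_pi.log (sqrt_pos.mpr pi_pos).ne').sub_const (log √π)
  rw [sub_self] at h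
  refine h.congr' ?_
  filter_upwards [eventually_ne_atTop 0] with n hn using (stirlingError_eq_log_stirlingSeq hn).symm

lemma stirlingError_le (n : ℕ) : stirlingError n ≤ 1 / (12 * n) := by
  rcases n with _ | n
  · simp [stirlingError_zero]
  have hmono : Monotone fun k : ℕ => stirlingError (k + 1) - 1 / (12 * ((k + 1 : ℕ) : ℝ)) := by
    refine monotone_nat_of_le_succ fun k => ?_
    have hstep := Stirling.log_stirlingSeq_sdiff_le (k + 1)
    have htelescope : 1 / (12 * ((k + 1 : ℕ) : ℝ) * (((k + 1 : ℕ) : ℝ) + 1))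
        = 1 / (12 * ((k + 1 : ℕ) : ℝ)) - 1 / (12 * ((k + 1 + 1 : ℕ) : ℝ)) := by
      push_cast
      field_simp
      ring
    rw [htelescope] at hstep
    rw [stirlingError_eq_log_stirlingSeq k.succ_ne_zero,
      stirlingError_eq_log_stirlingSeq (k + 1).succ_ne_zero]
    linarith
  have hlim : Tendsto (fun k : ℕ => stirlingError k - 1 / (12 * (k : ℝ))) atTop (𝓝 0) := by
    simpa only [div_div, sub_zero] using
      tendsto_stirlingError.sub (tendsto_const_div_atTop_nhds_zero_nat (1 / 12 : ℝ))
  exact sub_nonpos.mp (hmono.ge_of_tendsto ((tendsto_add_atTop_iff_nat 1).mpr hlim) n)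

/-! ### Counting dimer configurations -/

/-- A dimer configuration, regarded as an involutive permutation of the vertices. -/
def dimerPerm {N : ℕ} (D : Dimer N) : Equiv.Perm (Fin N) := Function.Involutive.toPerm D.1 D.2

/-- The number of dimers of a configuration, counted as the 2-cycles of `dimerPerm`. -/
def dimerCount {N : ℕ} (D : Dimer N) : ℕ := Multiset.card (dimerPerm D).cycleType

lemma involutive_iff_cycleType_eq_replicate {α : Type*} [Fintype α] [DecidableEq α]
    (σ : Equiv.Perm α) :
    Function.Involutive σ ↔ σ.cycleType = Multiset.replicate (Multiset.card σ.cycleType) 2 := by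
  rw [Multiset.eq_replicate_card, ← Equiv.Perm.pow_prime_eq_one_iff (p := 2), Equiv.Perm.ext_iff]
  simp only [sq, Equiv.Perm.mul_apply, Equiv.Perm.one_apply, Function.Involutive]

lemma cycleType_dimerPerm {N : ℕ} (D : Dimer N) :
    (dimerPerm D).cycleType = Multiset.replicate (dimerCount D) 2 :=
  (involutive_iff_cycleType_eq_replicate _).mp D.2

lemma card_monomers_add_two_mul_dimerCount {N : ℕ} (D : Dimer N) :
    (monomers D).card + 2 * dimerCount D = N := by
  have hmono : monomers D = (dimerPerm D).supportᶜ := by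
    ext i
    rw [mem_compl, Equiv.Perm.notMem_support]
    exact mem_filter_univ i
  have hsupp := (dimerPerm D).sum_cycleType
  rw [cycleType_dimerPerm, Multiset.sum_replicate, smul_eq_mul] at hsupp
  rw [hmono, mul_comm, hsupp, card_compl_add_card, Fintype.card_fin]

lemma card_filter_dimerCount_eq_card_filter_cycleType (N j : ℕ) :
    #{D : Dimer N | dimerCount D = j}
      = #{σ : Equiv.Perm (Fin N) | σ.cycleType = Multiset.replicate j 2} := by
  refine card_bij (fun D _ => dimerPerm D) (fun D hD => ?_) (fun D₁ _ D₂ _ h => ?_) fun σ hσ => ?_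
  · rw [mem_filter_univ] at hD ⊢
    rw [cycleType_dimerPerm, hD]
  · exact Subtype.ext (congrArg DFunLike.coe h)
  · rw [mem_filter_univ] at hσ
    have hinv : Function.Involutive σ := by
      rw [involutive_iff_cycleType_eq_replicate, hσ, Multiset.card_replicate]
    have hperm : dimerPerm ⟨σ, hinv⟩ = σ := Equiv.ext fun _ => rfl
    refine ⟨⟨σ, hinv⟩, ?_, hperm⟩
    rw [mem_filter_univ, dimerCount, hperm, hσ, Multiset.card_replicate]

lemma card_filter_dimerCount {N j : ℕ} (hj : 2 * j ≤ N) :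
    (#{D : Dimer N | dimerCount D = j} : ℝ)
      = N.factorial / ((N - 2 * j).factorial * 2 ^ j * j.factorial) := by
  have hprod : ∏ n ∈ (Multiset.replicate j 2).toFinset,
      ((Multiset.replicate j 2).count n).factorial = j.factorial := by
    rcases eq_or_ne j 0 with rfl | hj0
    · simp
    · simp [Multiset.toFinset_replicate, hj0]
  have hmul := Equiv.Perm.card_of_cycleType_mul_eq (α := Fin N) (Multiset.replicate j 2)
  rw [if_pos ⟨by simpa [mul_comm] using hj, fun a ha => (Multiset.eq_of_mem_replicate ha).ge⟩,
    hprod, Multiset.sum_replicate, Multiset.prod_replicate, Fintype.card_fin, smul_eq_mul,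
    mul_comm j 2] at hmul
  rw [card_filter_dimerCount_eq_card_filter_cycleType, eq_div_iff (by positivity)]
  exact_mod_cast hmul

/-- The density of monomers in a configuration with `j` dimers on `N` vertices. -/
noncomputable def monomerDensity (N j : ℕ) : ℝ := (N - 2 * j) / N

/-- The total Gibbs weight of the configurations with `j` dimers on `N` vertices. -/
noncomputable def dimerWeight (N : ℕ) (J h : ℝ) (j : ℕ) : ℝ :=
  N.factorial / ((N - 2 * j).factorial * 2 ^ j * j.factorial) *
    exp (N * (J * monomerDensity N j ^ 2 + bIMD N J h * monomerDensity N j))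

lemma card_monomers_eq_sub {N : ℕ} (D : Dimer N) :
    ((monomers D).card : ℝ) = N - 2 * dimerCount D := by
  rw [eq_sub_iff_add_eq]
  exact_mod_cast card_monomers_add_two_mul_dimerCount D

lemma wDim_eq {N : ℕ} (J h : ℝ) (D : Dimer N) :
    wDim N J h D = exp (N * (J * monomerDensity N (dimerCount D) ^ 2
      + bIMD N J h * monomerDensity N (dimerCount D))) := by
  rw [wDim, mDim, card_monomers_eq_sub, monomerDensity]

lemma sum_indicator_wDim_eq (N : ℕ) (J h : ℝ) (p : ℕ → Prop) [DecidablePred p] :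
    ∑ D : Dimer N, Set.indicator {D | p (dimerCount D)} (wDim N J h) D
      = ∑ j ∈ range (N / 2 + 1) with p j, dimerWeight N J h j := by
  have hmem : ∀ D ∈ (univ : Finset (Dimer N)), dimerCount D ∈ range (N / 2 + 1) := fun D _ => by
    have := card_monomers_add_two_mul_dimerCount D
    exact mem_range.mpr (by omega)
  rw [sum_filter, ← sum_fiberwise_of_maps_to hmem]
  refine sum_congr rfl fun j hj => ?_
  have hfiber : ∀ D ∈ ({D | dimerCount D = j} : Finset (Dimer N)),
      Set.indicator {D | p (dimerCount D)} (wDim N J h) D = if p j then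
        exp (N * (J * monomerDensity N j ^ 2 + bIMD N J h * monomerDensity N j)) else 0 := by
    intro D hD
    obtain rfl := (mem_filter_univ D).mp hD
    simp only [Set.indicator_apply, Set.mem_ofPred_eq, wDim_eq]
  have h2j : 2 * j ≤ N := by
    have := mem_range.mp hj
    omega
  rw [sum_congr rfl hfiber, sum_const, nsmul_eq_mul, card_filter_dimerCount h2j, mul_ite, mul_zero,
    dimerWeight]

lemma probDim_dimerCount (N : ℕ) (J h : ℝ) (p : ℕ → Prop) [DecidablePred p] :
    probDim N J h (fun D => p (dimerCount D))
      = (∑ j ∈ range (N / 2 + 1) with p j, dimerWeight N J h j)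
        / ∑ j ∈ range (N / 2 + 1), dimerWeight N J h j := by
  have htotal : ∑ D : Dimer N, wDim N J h D = ∑ j ∈ range (N / 2 + 1), dimerWeight N J h j := by
    simpa using sum_indicator_wDim_eq N J h fun _ => True
  rw [probDim, sum_indicator_wDim_eq, htotal]

/-! ### The rate function -/

lemma exp_four_mul (x : ℝ) : exp (4 * x) = exp (2 * x) ^ 2 := by
  rw [← exp_nat_mul]
  ring_nf

lemma gFun_pos (x : ℝ) : 0 < gFun x := by
  have he := exp_pos (2 * x)
  have hlt : exp (2 * x) < √(exp (4 * x) + 4 * exp (2 * x)) := by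
    rw [lt_sqrt he.le, exp_four_mul]
    linarith
  rw [gFun]
  linarith

lemma sqrt_eq_two_mul_gFun_add (x : ℝ) :
    √(exp (4 * x) + 4 * exp (2 * x)) = 2 * gFun x + exp (2 * x) := by
  rw [gFun]
  ring

lemma gFun_sq (x : ℝ) : gFun x ^ 2 = exp (2 * x) * (1 - gFun x) := by
  have h := sq_sqrt (by positivity : 0 ≤ exp (4 * x) + 4 * exp (2 * x))
  rw [sqrt_eq_two_mul_gFun_add, exp_four_mul] at h
  linarith

lemma gFun_lt_one (x : ℝ) : gFun x < 1 := by
  have h : 0 < exp (2 * x) * (1 - gFun x) := gFun_sq x ▸ pow_pos (gFun_pos x) 2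
  exact sub_pos.mp (pos_of_mul_pos_right h (exp_pos _).le)

lemma log_gFun_sub (x : ℝ) : log (gFun x) - log (1 - gFun x) / 2 = x := by
  have h := congrArg log (gFun_sq x)
  rw [log_pow, log_mul (exp_pos _).ne' (sub_pos.mpr (gFun_lt_one x)).ne', log_exp] at h
  push_cast at h
  linarith

lemma hasDerivAt_gFun (x : ℝ) :
    HasDerivAt gFun (2 * gFun x * (1 - gFun x) / (2 - gFun x)) x := by
  have hg0 := gFun_pos x
  have hg1 : 0 < 1 - gFun x := sub_pos.mpr (gFun_lt_one x)
  have hg2 : 0 < 2 - gFun x := by linarith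
  have hexp : ∀ a : ℝ, HasDerivAt (fun y => exp (a * y)) (exp (a * x) * a) x := fun a => by
    simpa using ((hasDerivAt_id x).const_mul a).exp
  have hderiv := ((((hexp 4).add ((hexp 2).const_mul 4)).sqrt
    (by simp only [Pi.add_apply]; positivity)).sub (hexp 2)).div_const 2
  refine hderiv.congr_deriv ?_
  have hexp_eq : exp (2 * x) = gFun x ^ 2 / (1 - gFun x) := by
    rw [eq_div_iff hg1.ne', gFun_sq]
  have hsqrt_eq : 2 * gFun x + gFun x ^ 2 / (1 - gFun x)
      = gFun x * (2 - gFun x) / (1 - gFun x) := by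
    field_simp
    ring
  simp only [Pi.add_apply]
  rw [sqrt_eq_two_mul_gFun_add, exp_four_mul, hexp_eq, hsqrt_eq]
  field_simp
  ring

lemma hasDerivAt_tauFun (J h m : ℝ) : HasDerivAt (tauFun J h) (2 * J) m :=
  (((((hasDerivAt_id m).const_mul 2).sub_const 1).mul_const J).add_const h).congr_deriv (by ring)

lemma hasDerivAt_gFun_comp_tauFun (J h m : ℝ) :
    HasDerivAt (fun x => gFun (tauFun J h x)) (2 * gFun (tauFun J h m) *
      (1 - gFun (tauFun J h m)) / (2 - gFun (tauFun J h m)) * (2 * J)) m :=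
  (hasDerivAt_gFun _).comp m (hasDerivAt_tauFun J h m)

lemma hasDerivAt_ptilde (J h m : ℝ) :
    HasDerivAt (ptilde J h) (2 * J * (gFun (tauFun J h m) - m)) m := by
  have hg1 : 0 < 1 - gFun (tauFun J h m) := sub_pos.mpr (gFun_lt_one _)
  have hg2 : 0 < 2 - gFun (tauFun J h m) := by linarith
  have hone_sub := (hasDerivAt_gFun_comp_tauFun J h m).const_sub 1
  have hderiv := (((hasDerivAt_id m).pow 2).const_mul (-J)).sub
    ((hone_sub.add (hone_sub.log hg1.ne')).div_const 2)
  refine hderiv.congr_deriv ?_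
  simp only [id]
  field_simp
  ring

lemma iteratedDeriv_two_ptilde (J h m : ℝ) :
    iteratedDeriv 2 (ptilde J h) m = -(2 * J) + 4 * J ^ 2 *
      (2 * gFun (tauFun J h m) * (1 - gFun (tauFun J h m)) / (2 - gFun (tauFun J h m))) := by
  have hderiv : deriv (ptilde J h) = fun m => 2 * J * (gFun (tauFun J h m) - m) :=
    funext fun m => (hasDerivAt_ptilde J h m).deriv
  rw [iteratedDeriv_succ, iteratedDeriv_one, hderiv]
  refine (((hasDerivAt_gFun_comp_tauFun J h m).sub
    (hasDerivAt_id m)).const_mul (2 * J)).deriv.trans ?_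
  ring

/-- The rate function of the monomer density: the configurations with monomer density `m` have
total Gibbs weight `N ^ (N / 2) * exp (N * rateFun J h m)` to exponential order. -/
noncomputable def rateFun (J h m : ℝ) : ℝ :=
  J * m ^ 2 + (h - J) * m - m * log m - (1 - m) / 2 * log (1 - m) - (1 - m) / 2

lemma rateFun_eq_tauFun (J h m : ℝ) :
    rateFun J h m
      = m * tauFun J h m - J * m ^ 2 - m * log m - (1 - m) / 2 * log (1 - m) - (1 - m) / 2 := by
  rw [rateFun, tauFun]
  ring

lemma sub_le_mul_log_sub_mul_log {a b : ℝ} (ha : 0 ≤ a) (hb : 0 < b) :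
    a - b ≤ a * log a - a * log b := by
  rcases ha.eq_or_lt with rfl | ha
  · simp [hb.le]
  · have h := mul_le_mul_of_nonneg_left (log_le_sub_one_of_pos (div_pos hb ha)) ha.le
    rw [log_div hb.ne' ha.ne', mul_sub_one, mul_div_cancel₀ _ ha.ne'] at h
    linarith

lemma rateFun_le_ptilde (J h : ℝ) {m : ℝ} (hm : m ∈ Set.Icc (0 : ℝ) 1) :
    rateFun J h m ≤ ptilde J h m := by
  have hτ := log_gFun_sub (tauFun J h m)
  have hm₁ := sub_le_mul_log_sub_mul_log hm.1 (gFun_pos (tauFun J h m))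
  have hm₂ := sub_le_mul_log_sub_mul_log (sub_nonneg.mpr hm.2)
    (sub_pos.mpr (gFun_lt_one (tauFun J h m)))
  rw [rateFun_eq_tauFun, ptilde]
  generalize gFun (tauFun J h m) = g at *
  rw [← hτ]
  linarith

lemma rateFun_eq_ptilde {J h m : ℝ} (hm : m = gFun (tauFun J h m)) :
    rateFun J h m = ptilde J h m := by
  have hτ := log_gFun_sub (tauFun J h m)
  rw [rateFun_eq_tauFun, ptilde]
  rw [← hm] at hτ ⊢
  rw [← hτ]
  ring

lemma continuous_rateFun (J h : ℝ) : Continuous (rateFun J h) := by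
  have heq : rateFun J h = fun m =>
      J * m ^ 2 + (h - J) * m - m * log m - (1 - m) * log (1 - m) / 2 - (1 - m) / 2 := by
    ext m
    rw [rateFun]
    ring
  rw [heq]
  have hlog := continuous_mul_log
  fun_prop

/-- The derivative of `rateFun J h` on `(0, 1)`. -/
noncomputable def rateFunDeriv (J h m : ℝ) : ℝ := tauFun J h m - log m + log (1 - m) / 2

/-- Minus the second derivative of `rateFun J h` on `(0, 1)`, which does not depend on `h`. -/
noncomputable def rateCurvature (J m : ℝ) : ℝ := 1 / m + 1 / (2 * (1 - m)) - 2 * J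

lemma hasDerivAt_rateFun (J h : ℝ) {m : ℝ} (hm : m ∈ Set.Ioo (0 : ℝ) 1) :
    HasDerivAt (rateFun J h) (rateFunDeriv J h m) m := by
  have hm₁ : 0 < 1 - m := sub_pos.mpr hm.2
  have hid := hasDerivAt_id m
  have hsub := hid.const_sub 1
  have hderiv := ((((hid.pow 2).const_mul J).add (hid.const_mul (h - J))).sub
    (hid.mul (hid.log hm.1.ne'))).sub ((hsub.div_const 2).mul (hsub.log hm₁.ne'))
      |>.sub (hsub.div_const 2)
  refine hderiv.congr_deriv ?_
  simp only [id, rateFunDeriv, tauFun]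
  have := hm.1
  field_simp
  ring

lemma hasDerivAt_rateFunDeriv (J h : ℝ) {m : ℝ} (hm : m ∈ Set.Ioo (0 : ℝ) 1) :
    HasDerivAt (rateFunDeriv J h) (-rateCurvature J m) m := by
  have hm₁ : 0 < 1 - m := sub_pos.mpr hm.2
  have hid := hasDerivAt_id m
  refine (((hasDerivAt_tauFun J h m).sub (hid.log hm.1.ne')).add
    (((hid.const_sub 1).log hm₁.ne').div_const 2)).congr_deriv ?_
  rw [rateCurvature]
  simp only [id]
  field_simp
  ring

lemma differentiableAt_rateCurvature (J : ℝ) {m : ℝ} (hm : m ∈ Set.Ioo (0 : ℝ) 1) :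
    DifferentiableAt ℝ (rateCurvature J) m := by
  have hm₀ := hm.1.ne'
  have hm₁ : 2 * (1 - m) ≠ 0 := (mul_pos two_pos (sub_pos.mpr hm.2)).ne'
  unfold rateCurvature
  fun_prop (disch := assumption)

lemma mem_Ioo_of_eq_gFun {m x : ℝ} (hm : m = gFun x) : m ∈ Set.Ioo (0 : ℝ) 1 :=
  hm ▸ ⟨gFun_pos x, gFun_lt_one x⟩

lemma pos_of_iteratedDeriv_two_ptilde_neg {J h m : ℝ}
    (hconc : iteratedDeriv 2 (ptilde J h) m < 0) : 0 < J := by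
  by_contra! hJ
  rw [iteratedDeriv_two_ptilde] at hconc
  have hg0 := gFun_pos (tauFun J h m)
  have hg1 : 0 < 1 - gFun (tauFun J h m) := sub_pos.mpr (gFun_lt_one _)
  have hg2 : 0 < 2 - gFun (tauFun J h m) := by linarith
  have hnonneg : 0 ≤ 4 * J ^ 2 *
      (2 * gFun (tauFun J h m) * (1 - gFun (tauFun J h m)) / (2 - gFun (tauFun J h m))) := by
    positivity
  linarith

lemma rateCurvature_pos_and_variance_eq {J h m : ℝ} (hm : m = gFun (tauFun J h m))
    (hconc : iteratedDeriv 2 (ptilde J h) m < 0) :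
    0 < rateCurvature J m ∧
      -(iteratedDeriv 2 (ptilde J h) m)⁻¹ - (2 * J)⁻¹ = (rateCurvature J m)⁻¹ := by
  have hJ := pos_of_iteratedDeriv_two_ptilde_neg hconc
  obtain ⟨hm₀, hm₁⟩ := mem_Ioo_of_eq_gFun hm
  have hm₁' : 0 < 1 - m := sub_pos.mpr hm₁
  have hm₂ : 0 < 2 - m := by linarith
  set V := 2 * m * (1 - m) / (2 - m) with hV
  have hV₀ : 0 < V := by positivity
  have hVinv : V⁻¹ = rateCurvature J m + 2 * J := by
    rw [hV, rateCurvature]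
    field_simp
    ring
  have hp : iteratedDeriv 2 (ptilde J h) m = -(2 * J * V * rateCurvature J m) := by
    rw [iteratedDeriv_two_ptilde, ← hm, ← hV, eq_sub_of_add_eq hVinv.symm]
    field_simp
    ring
  have hq : 0 < rateCurvature J m := by
    rw [hp, neg_lt_zero] at hconc
    exact pos_of_mul_pos_right hconc (by positivity)
  refine ⟨hq, ?_⟩
  rw [hp, inv_neg, neg_neg, mul_inv, mul_inv, hVinv]
  field_simp
  ring

/-! ### The local limit theorem for the monomer density -/

lemma isBigO_rateFun_sub {J h m₀ : ℝ} (hm₀ : m₀ ∈ Set.Ioo (0 : ℝ) 1)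
    (hmax : IsLocalMax (rateFun J h) m₀) :
    (fun m => rateFun J h m - (rateFun J h m₀ - rateCurvature J m₀ / 2 * (m - m₀) ^ 2))
      =O[𝓝 m₀] fun m => (m - m₀) ^ 3 := by
  have hmem : ∀ᶠ m in 𝓝 m₀, m ∈ Set.Ioo (0 : ℝ) 1 := isOpen_Ioo.mem_nhds hm₀
  have hstat : rateFunDeriv J h m₀ = 0 := hmax.hasDerivAt_eq_zero (hasDerivAt_rateFun J h hm₀)
  refine (isBigO_sub_taylor_two (hmem.mono fun m hm => hasDerivAt_rateFun J h hm)
    (hmem.mono fun m hm => hasDerivAt_rateFunDeriv J h hm)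
    (differentiableAt_rateCurvature J hm₀).neg).congr_left fun m => ?_
  rw [hstat]
  ring

lemma exists_rateFun_le_sub_mul_sq {J h m₀ : ℝ}
    (hmax : ∀ m ∈ Set.Icc (0 : ℝ) 1, m ≠ m₀ → rateFun J h m < rateFun J h m₀)
    (htaylor : (fun m => rateFun J h m - (rateFun J h m₀ - rateCurvature J m₀ / 2 * (m - m₀) ^ 2))
      =O[𝓝 m₀] fun m => (m - m₀) ^ 3) (hq : 0 < rateCurvature J m₀) :
    ∃ c > 0, ∀ m ∈ Set.Icc (0 : ℝ) 1, rateFun J h m ≤ rateFun J h m₀ - c * (m - m₀) ^ 2 := by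
  have hloc := eventually_le_sub_mul_sq (half_pos hq) htaylor
  simpa only [Real.dist_eq, sq_abs] using
    exists_le_sub_mul_dist_sq_of_isCompact isCompact_Icc (continuous_rateFun J h).continuousOn hmax
      (half_pos (half_pos hq)) (by simpa only [Real.dist_eq, sq_abs] using hloc)

section

variable {N j : ℕ} (J h : ℝ)

lemma monomerDensity_mem_Icc (hj : 2 * j ≤ N) : monomerDensity N j ∈ Set.Icc (0 : ℝ) 1 := by
  have hj' : (2 * j : ℝ) ≤ N := by exact_mod_cast hj
  refine ⟨div_nonneg (sub_nonneg.mpr hj') (by positivity), div_le_one_of_le₀ ?_ (by positivity)⟩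
  linarith [(by positivity : (0 : ℝ) ≤ j)]

lemma natCast_sub_eq_mul_monomerDensity (hN : N ≠ 0) (hj : 2 * j ≤ N) :
    ((N - 2 * j : ℕ) : ℝ) = N * monomerDensity N j := by
  rw [monomerDensity, mul_div_cancel₀ _ (Nat.cast_ne_zero.mpr hN)]
  push_cast [hj]
  ring

lemma natCast_eq_mul_one_sub_monomerDensity (j : ℕ) (hN : N ≠ 0) :
    (j : ℝ) = N * ((1 - monomerDensity N j) / 2) := by
  rw [monomerDensity]
  field_simp
  ring

lemma dimerWeight_pos (N j : ℕ) : 0 < dimerWeight N J h j := by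
  rw [dimerWeight]
  positivity

lemma mul_mul_log_mul {a : ℝ} (ha : a ≠ 0) (x : ℝ) :
    a * x * log (a * x) = a * x * (log a + log x) := by
  rcases eq_or_ne x 0 with rfl | hx
  · simp
  · rw [log_mul ha hx]

lemma log_dimerWeight (hN : N ≠ 0) (hj : 2 * j ≤ N) :
    log (dimerWeight N J h j) = N / 2 * log N + N * rateFun J h (monomerDensity N j)
      + (log (2 * π * N) - log (2 * π * (N - 2 * j : ℕ)) - log (2 * π * j)) / 2
      + (stirlingError N - stirlingError (N - 2 * j) - stirlingError j) := by
  have hN' : (N : ℝ) ≠ 0 := Nat.cast_ne_zero.mpr hN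
  have hk := natCast_sub_eq_mul_monomerDensity hN hj
  have hj' := natCast_eq_mul_one_sub_monomerDensity j hN
  have hlog : log (dimerWeight N J h j) = log N.factorial - log (N - 2 * j).factorial - j * log 2
      - log j.factorial
      + N * (J * monomerDensity N j ^ 2 + bIMD N J h * monomerDensity N j) := by
    rw [dimerWeight, log_mul (by positivity) (exp_pos _).ne', log_exp,
      log_div (by positivity) (by positivity), log_mul (by positivity) (by positivity),
      log_mul (by positivity) (by positivity), log_pow]
    ring
  have hklog : ((N - 2 * j : ℕ) : ℝ) * log (N - 2 * j : ℕ)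
      = N * monomerDensity N j * (log N + log (monomerDensity N j)) := by
    rw [hk, mul_mul_log_mul hN']
  have hjlog : (j : ℝ) * log j + j * log 2
      = N * ((1 - monomerDensity N j) / 2) * (log N + log (1 - monomerDensity N j)) := by
    rw [hj', mul_mul_log_mul hN']
    rcases eq_or_ne (1 - monomerDensity N j) 0 with h0 | h0
    · simp only [h0, zero_div, mul_zero, zero_mul, add_zero]
    · rw [log_div h0 two_ne_zero]
      ring
  rw [hlog, rateFun, bIMD]
  simp only [stirlingError]
  linear_combination -hklog - hjlog + hk + hj'

lemma log_two_pi_mul_natCast_nonneg (n : ℕ) : 0 ≤ log (2 * π * n) := by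
  rcases eq_or_ne n 0 with rfl | hn
  · simp
  · have h1 : (1 : ℝ) ≤ n := by exact_mod_cast Nat.one_le_iff_ne_zero.mpr hn
    exact log_nonneg (by nlinarith [pi_gt_three])

lemma log_dimerWeight_le (hN : N ≠ 0) (hj : 2 * j ≤ N) :
    log (dimerWeight N J h j)
      ≤ N / 2 * log N + N * rateFun J h (monomerDensity N j) + log (2 * π * N) / 2 + 1 := by
  have h1 : (1 : ℝ) ≤ N := by exact_mod_cast Nat.one_le_iff_ne_zero.mpr hN
  have herr : 1 / (12 * (N : ℝ)) ≤ 1 := (div_le_one (by positivity)).mpr (by linarith)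
  rw [log_dimerWeight J h hN hj]
  linarith [stirlingError_le N, stirlingError_nonneg (N - 2 * j), stirlingError_nonneg j,
    log_two_pi_mul_natCast_nonneg (N - 2 * j), log_two_pi_mul_natCast_nonneg j]

/-- The logarithm of Stirling's approximation to the total weight of the configurations with
monomer density `m` on `N` vertices. -/
noncomputable def stirlingExponent (N : ℕ) (J h m : ℝ) : ℝ :=
  N / 2 * log N + N * rateFun J h m - log (π * N * (m * (1 - m))) / 2

lemma log_dimerWeight_sub_stirlingExponent (hN : N ≠ 0) (hj : 2 * j ≤ N)
    (hm : monomerDensity N j ∈ Set.Ioo (0 : ℝ) 1) :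
    log (dimerWeight N J h j) - stirlingExponent N J h (monomerDensity N j)
      = stirlingError N - stirlingError (N - 2 * j) - stirlingError j := by
  have hm₀ := hm.1.ne'
  have hm₁ := (sub_pos.mpr hm.2).ne'
  have hk : log (2 * π * (N - 2 * j : ℕ)) = log (2 * π * N) + log (monomerDensity N j) := by
    rw [natCast_sub_eq_mul_monomerDensity hN hj, ← mul_assoc, log_mul (by positivity) hm₀]
  have hj' : log (2 * π * j) = log (π * N) + log (1 - monomerDensity N j) := by
    rw [natCast_eq_mul_one_sub_monomerDensity j hN, ← log_mul (by positivity) hm₁]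
    ring_nf
  rw [log_dimerWeight J h hN hj, stirlingExponent, hk, hj', log_mul (by positivity)
    (mul_ne_zero hm₀ hm₁), log_mul hm₀ hm₁]
  ring

lemma stirlingError_le_of_le {n : ℕ} {a : ℝ} (ha : 0 < a) (han : a ≤ 2 * n) :
    stirlingError n ≤ 1 / a := by
  refine (stirlingError_le n).trans (one_div_le_one_div_of_le ha ?_)
  linarith

lemma abs_stirlingError_sub_le {ε : ℝ} (hε : 0 < ε) (hN : N ≠ 0) (hj : 2 * j ≤ N)
    (hm₀ : ε ≤ monomerDensity N j) (hm₁ : ε ≤ 1 - monomerDensity N j) :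
    |stirlingError N - stirlingError (N - 2 * j) - stirlingError j| ≤ (1 + 2 / ε) * (1 / N) := by
  have hN₀ : (0 : ℝ) < N := by positivity
  have hNε : 0 < N * ε := by positivity
  have hk := stirlingError_le_of_le (n := N - 2 * j) hNε (by
    rw [natCast_sub_eq_mul_monomerDensity hN hj]
    nlinarith)
  have hj' := stirlingError_le_of_le (n := j) hNε (by
    rw [natCast_eq_mul_one_sub_monomerDensity j hN]
    nlinarith)
  have hN₁ := stirlingError_le_of_le (n := N) hN₀ (by linarith)
  have hexpand : (1 + 2 / ε) * (1 / N) = 1 / N + (1 / (N * ε) + 1 / (N * ε)) := by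
    field_simp
    ring
  have hNε' : 0 < 1 / (N * ε) := by positivity
  have hN₁' : 0 < 1 / (N : ℝ) := by positivity
  rw [hexpand, abs_le]
  constructor <;>
    linarith [stirlingError_nonneg N, stirlingError_nonneg (N - 2 * j), stirlingError_nonneg j]

end

lemma exists_log_dimerWeight_sub_stirlingExponent_le (J h : ℝ) {m₀ : ℝ}
    (hm₀ : m₀ ∈ Set.Ioo (0 : ℝ) 1) :
    ∃ A, ∀ {N j : ℕ}, N ≠ 0 → 2 * j ≤ N →
      log (dimerWeight N J h j) - stirlingExponent N J h m₀
        ≤ N * (rateFun J h (monomerDensity N j) - rateFun J h m₀) + A + log N := by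
  refine ⟨(log (2 * π) + log (π * (m₀ * (1 - m₀)))) / 2 + 1, fun {N j} hN hj => ?_⟩
  have hN' : (N : ℝ) ≠ 0 := Nat.cast_ne_zero.mpr hN
  have hv : 0 < m₀ * (1 - m₀) := mul_pos hm₀.1 (sub_pos.mpr hm₀.2)
  have hlog : log (2 * π * N) = log (2 * π) + log N := log_mul (by positivity) hN'
  have hlog' : log (π * N * (m₀ * (1 - m₀))) = log (π * (m₀ * (1 - m₀))) + log N := by
    rw [← log_mul (by positivity) hN', mul_right_comm]
  rw [stirlingExponent, hlog']
  linarith [log_dimerWeight_le J h hN hj]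

lemma stirlingExponent_sub_stirlingExponent {N : ℕ} (J h : ℝ) {m m' : ℝ} (hN : N ≠ 0)
    (hm : m ∈ Set.Ioo (0 : ℝ) 1) (hm' : m' ∈ Set.Ioo (0 : ℝ) 1) :
    stirlingExponent N J h m - stirlingExponent N J h m'
      = N * (rateFun J h m - rateFun J h m') - (log (m * (1 - m)) - log (m' * (1 - m'))) / 2 := by
  rw [stirlingExponent, stirlingExponent,
    log_mul (by positivity) (mul_pos hm.1 (sub_pos.mpr hm.2)).ne',
    log_mul (by positivity) (mul_pos hm'.1 (sub_pos.mpr hm'.2)).ne']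
  ring

lemma exists_abs_log_dimerWeight_sub_stirlingExponent_le (J h : ℝ) {m₀ : ℝ}
    (hm₀ : m₀ ∈ Set.Ioo (0 : ℝ) 1) :
    ∃ B, 0 ≤ B ∧ ∃ ε > 0, ∀ {N j : ℕ}, N ≠ 0 → 2 * j ≤ N → |monomerDensity N j - m₀| < ε →
      |log (dimerWeight N J h j) - stirlingExponent N J h m₀
          - N * (rateFun J h (monomerDensity N j) - rateFun J h m₀)|
        ≤ B * (|monomerDensity N j - m₀| + 1 / N) := by
  have hm₁ : 0 < 1 - m₀ := sub_pos.mpr hm₀.2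
  set η := min m₀ (1 - m₀) / 2 with hη
  have hη₀ : 0 < η := half_pos (lt_min hm₀.1 hm₁)
  have hdiff : DifferentiableAt ℝ (fun m => log (m * (1 - m))) m₀ :=
    (differentiableAt_id.mul (differentiableAt_id.const_sub 1)).log (mul_pos hm₀.1 hm₁).ne'
  obtain ⟨L, hL₀, hL⟩ := hdiff.isBigO_sub.exists_pos
  obtain ⟨ε, hε, hLε⟩ := Metric.eventually_nhds_iff.mp hL.bound
  refine ⟨L + (1 + 2 / η), by positivity, min ε η, lt_min hε hη₀, fun {N j} hN hj hnear => ?_⟩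
  set m := monomerDensity N j
  obtain ⟨hlo, hhi⟩ := abs_lt.mp (hnear.trans_le (min_le_right _ _))
  have hmη : η ≤ m := by linarith [min_le_left m₀ (1 - m₀)]
  have hmη' : η ≤ 1 - m := by linarith [min_le_right m₀ (1 - m₀)]
  have hstirling := log_dimerWeight_sub_stirlingExponent J h hN hj ⟨by linarith, by linarith⟩
  have hexponent := stirlingExponent_sub_stirlingExponent J h hN
    (⟨by linarith, by linarith⟩ : m ∈ Set.Ioo (0 : ℝ) 1) hm₀
  have herr := abs_stirlingError_sub_le hη₀ hN hj hmη hmη'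
  have hlip : |log (m * (1 - m)) - log (m₀ * (1 - m₀))| ≤ L * |m - m₀| := by
    simpa only [norm_eq_abs] using hLε (hnear.trans_le (min_le_left _ _))
  calc |log (dimerWeight N J h j) - stirlingExponent N J h m₀
        - N * (rateFun J h m - rateFun J h m₀)|
      = |(stirlingError N - stirlingError (N - 2 * j) - stirlingError j)
          - (log (m * (1 - m)) - log (m₀ * (1 - m₀))) / 2| := by
        congr 1
        linarith
    _ ≤ (1 + 2 / η) * (1 / N) + L * |m - m₀| := by
        refine (abs_sub _ _).trans (add_le_add herr ?_)
        rw [abs_div, abs_two]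
        linarith [abs_nonneg (log (m * (1 - m)) - log (m₀ * (1 - m₀)))]
    _ ≤ (L + (1 + 2 / η)) * (|m - m₀| + 1 / N) := by
        have hcross : 0 ≤ L * (1 / N) + (1 + 2 / η) * |m - m₀| := by positivity
        linarith

/-- The rescaled fluctuation around `m₀` of the monomer density of a configuration with `j` dimers
on `N` vertices. -/
noncomputable def scaledDensity (N : ℕ) (m₀ : ℝ) (j : ℕ) : ℝ := √N * (monomerDensity N j - m₀)

lemma scaledDensity_eq {N : ℕ} (hN : N ≠ 0) (m₀ : ℝ) (j : ℕ) :
    scaledDensity N m₀ j = (N - 2 * j - N * m₀) / √N := by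
  have hN₀ : (0 : ℝ) < N := by positivity
  rw [scaledDensity, monomerDensity, div_sub' hN₀.ne', mul_div_assoc', div_eq_div_iff hN₀.ne'
    (sqrt_pos.mpr hN₀).ne', mul_right_comm, mul_self_sqrt hN₀.le, mul_comm]

theorem exists_abs_dimerWeight_div_sub_gaussianPDFReal_le {J h m₀ : ℝ}
    (hm₀ : m₀ ∈ Set.Ioo (0 : ℝ) 1)
    (hmax : ∀ m ∈ Set.Icc (0 : ℝ) 1, m ≠ m₀ → rateFun J h m < rateFun J h m₀) {v : ℝ≥0}
    (hv₀ : v ≠ 0) (hv : (v : ℝ)⁻¹ = rateCurvature J m₀) :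
    ∃ C, 0 ≤ C ∧ ∃ d > 0, ∀ {N j : ℕ}, N ≠ 0 → 2 * j ≤ N →
      |dimerWeight N J h j / (√(2 * π * v) * exp (stirlingExponent N J h m₀))
          - gaussianPDFReal 0 v (scaledDensity N m₀ j)|
        ≤ C / √N * exp (-d * scaledDensity N m₀ j ^ 2) := by
  have hq : 0 < rateCurvature J m₀ := hv ▸ inv_pos.mpr (by positivity)
  have hlocmax : IsLocalMax (rateFun J h) m₀ := by
    filter_upwards [Icc_mem_nhds hm₀.1 hm₀.2] with m hm
    rcases eq_or_ne m m₀ with rfl | hne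
    exacts [le_rfl, (hmax m hm hne).le]
  have htaylor := isBigO_rateFun_sub hm₀ hlocmax
  obtain ⟨c, hc, hdecay⟩ := exists_rateFun_le_sub_mul_sq hmax htaylor hq
  obtain ⟨A, hA⟩ := exists_log_dimerWeight_sub_stirlingExponent_le J h hm₀
  obtain ⟨B, hB, ε, hε, hnear⟩ := exists_abs_log_dimerWeight_sub_stirlingExponent_le J h hm₀
  obtain ⟨C, hC, d, hd, hlaplace⟩ :=
    exists_abs_exp_sub_exp_neg_mul_sq_le (A := A) (half_pos hq) hc hB hε hdecay htaylor
  set a := (√(2 * π * v))⁻¹ with ha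
  refine ⟨a * C, by positivity, d, hd, fun {N j} hN hj => ?_⟩
  have hratio : dimerWeight N J h j / (√(2 * π * v) * exp (stirlingExponent N J h m₀))
      = a * exp (log (dimerWeight N J h j) - stirlingExponent N J h m₀) := by
    rw [exp_sub, exp_log (dimerWeight_pos J h N j), ha]
    field_simp
  have hgauss : gaussianPDFReal 0 v (scaledDensity N m₀ j)
      = a * exp (-(rateCurvature J m₀ / 2) * scaledDensity N m₀ j ^ 2) := by
    rw [gaussianPDFReal_zero_eq, mul_inv 2 (v : ℝ), hv, inv_mul_eq_div 2]
  rw [hratio, hgauss, ← mul_sub, abs_mul, abs_of_nonneg (by positivity : 0 ≤ a), mul_div_assoc,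
    mul_assoc]
  exact mul_le_mul_of_nonneg_left (hlaplace (by exact_mod_cast Nat.one_le_iff_ne_zero.mpr hN)
    (monomerDensity_mem_Icc hj) (hA hN hj) (hnear hN hj)) (by positivity)

lemma scaledDensity_succ {N : ℕ} (hN : N ≠ 0) (m₀ : ℝ) (j : ℕ) :
    scaledDensity N m₀ (j + 1) = scaledDensity N m₀ j - 2 / √N := by
  rw [scaledDensity_eq hN, scaledDensity_eq hN]
  push_cast
  ring

lemma isGrid_scaledDensity {N : ℕ} (hN : N ≠ 0) {m₀ : ℝ} :
    IsGrid (range (N / 2 + 1)) (scaledDensity N m₀) (2 / √N) (min m₀ (1 - m₀) * √N) := by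
  have hN₀ : (0 : ℝ) < N := by positivity
  have hsqrt : 0 < √(N : ℝ) := sqrt_pos.mpr hN₀
  constructor
  · have hanti : Antitone (scaledDensity N m₀) := antitone_nat_of_succ_le fun j => by
      rw [scaledDensity_succ hN]
      exact sub_le_self _ (by positivity)
    simpa only [Order.succ_eq_add_one, scaledDensity_succ hN] using!
      hanti.pairwise_disjoint_on_Ioc_succ.set_pairwise _
  · rintro x ⟨hlo, hhi⟩
    have hx₀ : -(m₀ * √N) < x := hlo.trans_le' (neg_le_neg (by gcongr; exact min_le_left _ _))
    have hx₁ : x < (1 - m₀) * √N := hhi.trans_le (by gcongr; exact min_le_right _ _)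
    have hy₀ : 0 < N * (1 - m₀) - √N * x := by nlinarith [mul_self_sqrt hN₀.le]
    have hy₁ : N * (1 - m₀) - √N * x < N := by nlinarith [mul_self_sqrt hN₀.le]
    set j := ⌊(N * (1 - m₀) - √N * x) / 2⌋₊
    have hj := Nat.floor_le (half_pos hy₀).le
    have hj' := Nat.lt_floor_add_one ((N * (1 - m₀) - √N * x) / 2)
    have hjN : 2 * j ≤ N := by
      have : (2 * j : ℝ) ≤ N := by linarith
      exact_mod_cast this
    refine Set.mem_biUnion (mem_coe.mpr (mem_range.mpr (by omega : j < N / 2 + 1))) ⟨?_, ?_⟩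
    · rw [← scaledDensity_succ hN, scaledDensity_eq hN, div_lt_iff₀ hsqrt]
      push_cast
      linarith
    · rw [scaledDensity_eq hN, le_div_iff₀ hsqrt]
      linarith

theorem exists_abs_probDim_sub_gaussCDF_le {J h m₀ : ℝ} (hm₀ : m₀ ∈ Set.Ioo (0 : ℝ) 1)
    (hmax : ∀ m ∈ Set.Icc (0 : ℝ) 1, m ≠ m₀ → rateFun J h m < rateFun J h m₀)
    (hq : 0 < rateCurvature J m₀) :
    ∃ K, ∀ N : ℕ, 1 ≤ N → ∀ z,
      |probDim N J h (fun D => (((monomers D).card : ℝ) - N * m₀) / √N ≤ z)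
          - gaussCDF (rateCurvature J m₀)⁻¹ z| ≤ K / √N := by
  set v := (rateCurvature J m₀)⁻¹.toNNReal with hv
  have hv₀ : v ≠ 0 := (Real.toNNReal_pos.mpr (inv_pos.mpr hq)).ne'
  have hvq : (v : ℝ)⁻¹ = rateCurvature J m₀ := by
    rw [hv, Real.coe_toNNReal _ (inv_pos.mpr hq).le, inv_inv]
  have hr : 0 < min m₀ (1 - m₀) := lt_min hm₀.1 (sub_pos.mpr hm₀.2)
  obtain ⟨C, hC, d, hd, hlocal⟩ :=
    exists_abs_dimerWeight_div_sub_gaussianPDFReal_le hm₀ hmax hv₀ hvq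
  obtain ⟨C', hC', hsum⟩ := exists_abs_sum_div_sum_sub_gaussianReal_le ℕ hv₀ hd 2
  refine ⟨C' * (C + 2 + 1 / min m₀ (1 - m₀) ^ 2), fun N hN z => ?_⟩
  have hN₀ : N ≠ 0 := Nat.one_le_iff_ne_zero.mp hN
  have hsqrt : 1 ≤ √(N : ℝ) := one_le_sqrt.mpr (mod_cast hN)
  have hevent : (fun D : Dimer N => (((monomers D).card : ℝ) - N * m₀) / √N ≤ z)
      = fun D => scaledDensity N m₀ (dimerCount D) ≤ z := by
    simp only [card_monomers_eq_sub, scaledDensity_eq hN₀]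
  rw [hevent, probDim_dimerCount N J h fun j => scaledDensity N m₀ j ≤ z]
  refine (hsum (isGrid_scaledDensity hN₀) (by positivity) (by positivity)
    (div_le_self zero_le_two hsqrt) (by positivity)
    (by positivity : 0 < √(2 * π * v) * exp (stirlingExponent N J h m₀))
    (fun j _ => (dimerWeight_pos J h N j).le)
    (fun j hj => hlocal hN₀ (by have := mem_range.mp hj; omega)) z).trans ?_
  rw [mul_div_assoc, add_div, add_div, div_div, mul_pow]
  gcongr
  exact le_self_pow₀ hsqrt two_ne_zero

/-- CLT with Berry–Esseen rate for the monomer density away from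
criticality: if `m₀` is the unique maximizer of `𝑝̃` on `[0,1]`, satisfies the
fixed-point equation and `𝑝̃''(m₀) < 0`, then `λ = -1/𝑝̃''(m₀) - 1/(2J) > 0` and the
Kolmogorov distance between `(|𝓜(D)| - N m₀)/√N` and `N(0, λ)` is at most `K/√N`. -/
theorem stmt0 (J h : ℝ) (hJ : 0 ≤ J) (m₀ : ℝ) (hm₀ : m₀ ∈ Set.Icc (0:ℝ) 1)
    (hmax : ∀ m ∈ Set.Icc (0:ℝ) 1, ptilde J h m ≤ ptilde J h m₀)
    (huniq : ∀ m ∈ Set.Icc (0:ℝ) 1, ptilde J h m = ptilde J h m₀ → m = m₀)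
    (hfix : m₀ = gFun (tauFun J h m₀))
    (hconc : iteratedDeriv 2 (ptilde J h) m₀ < 0) :
    0 < -(iteratedDeriv 2 (ptilde J h) m₀)⁻¹ - (2*J)⁻¹ ∧
    ∃ K : ℝ, ∀ N : ℕ, 1 ≤ N → ∀ z : ℝ,
      |probDim N J h
          (fun D => (((monomers D).card : ℝ) - N * m₀) / Real.sqrt N ≤ z)
        - gaussCDF (-(iteratedDeriv 2 (ptilde J h) m₀)⁻¹ - (2*J)⁻¹) z|
      ≤ K / Real.sqrt N := by
  obtain ⟨hq, hvar⟩ := rateCurvature_pos_and_variance_eq hfix hconc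
  have hstrict : ∀ m ∈ Set.Icc (0 : ℝ) 1, m ≠ m₀ → rateFun J h m < rateFun J h m₀ :=
    fun m hm hne => calc
      rateFun J h m ≤ ptilde J h m := rateFun_le_ptilde J h hm
      _ < ptilde J h m₀ := (hmax m hm).lt_of_ne fun heq => hne (huniq m hm heq)
      _ = rateFun J h m₀ := (rateFun_eq_ptilde hfix).symm
  rw [hvar]
  exact ⟨inv_pos.mpr hq, exists_abs_probDim_sub_gaussCDF_le (mem_Ioo_of_eq_gFun hfix) hstrict hq⟩
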